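/- arXiv:1903.12567 — 2 statements merged into one kernel-verified Lean document; each statement's English description precedes it below -/
import Mathlib

section
/- The group G₁₃₀ is isomorphic to the quotient of the direct product A(D4) × ℤ³ by the normal closure of the single element (((a1*a2*a3*b)^3)⁻¹, u1*u2*u3), where u1, u2, u3 is the standard basis of ℤ³ (corresponding to the generators c12, c23, c31) and the star relation identifies c12c23c31 with (a1a2a3b)^3. -/
/-- Relations of the Artin group of type `D₄` on generators `a1 = of 0`, `a2 = of 1`,
`a3 = of 2`, `b = of 3`: the `aᵢ` pairwise commute and each `aᵢ` braids with `b`. -/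
def AD4rels : Set (FreeGroup (Fin 4)) :=
  {FreeGroup.of 0 * FreeGroup.of 1 * (FreeGroup.of 1 * FreeGroup.of 0)⁻¹,
   FreeGroup.of 0 * FreeGroup.of 2 * (FreeGroup.of 2 * FreeGroup.of 0)⁻¹,
   FreeGroup.of 1 * FreeGroup.of 2 * (FreeGroup.of 2 * FreeGroup.of 1)⁻¹,
   FreeGroup.of 0 * FreeGroup.of 3 * FreeGroup.of 0 *
      (FreeGroup.of 3 * FreeGroup.of 0 * FreeGroup.of 3)⁻¹,
   FreeGroup.of 1 * FreeGroup.of 3 * FreeGroup.of 1 *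
      (FreeGroup.of 3 * FreeGroup.of 1 * FreeGroup.of 3)⁻¹,
   FreeGroup.of 2 * FreeGroup.of 3 * FreeGroup.of 2 *
      (FreeGroup.of 3 * FreeGroup.of 2 * FreeGroup.of 3)⁻¹}

/-- The Artin group of type `D₄`, as a presented group. -/
abbrev AD4 : Type := PresentedGroup AD4rels

namespace G130aux
/-- Generators of the Gervais presentation of `PMod(1,3,0)`:
`b = of 0`, `a1 = of 1`, `a2 = of 2`, `a3 = of 3`,
`c12 = of 4`, `c21 = of 5`, `c13 = of 6`, `c31 = of 7`, `c23 = of 8`, `c32 = of 9`. -/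
def g (i : Fin 10) : FreeGroup (Fin 10) := FreeGroup.of i
/-- The relator expressing that `x` and `y` commute. -/
def comm (x y : FreeGroup (Fin 10)) : FreeGroup (Fin 10) := x * y * (y * x)⁻¹
/-- The relator expressing the braid relation `x y x = y x y`. -/
def braid (x y : FreeGroup (Fin 10)) : FreeGroup (Fin 10) := x * y * x * (y * x * y)⁻¹
end G130aux

open G130aux in
/-- The relations of the Gervais presentation of `PMod(1,3,0)`. -/
def G130rels : Set (FreeGroup (Fin 10)) :=
  {comm (g 1) (g 2), comm (g 1) (g 3), comm (g 2) (g 3),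
   comm (g 1) (g 4), comm (g 1) (g 5), comm (g 1) (g 6), comm (g 1) (g 7), comm (g 1) (g 8),
   comm (g 2) (g 4), comm (g 2) (g 5), comm (g 2) (g 7), comm (g 2) (g 8), comm (g 2) (g 9),
   comm (g 3) (g 4), comm (g 3) (g 6), comm (g 3) (g 7), comm (g 3) (g 8), comm (g 3) (g 9),
   comm (g 0) (g 4), comm (g 0) (g 5), comm (g 0) (g 6), comm (g 0) (g 7), comm (g 0) (g 8),
   comm (g 0) (g 9),
   comm (g 4) (g 5), comm (g 4) (g 6), comm (g 4) (g 7), comm (g 4) (g 8), comm (g 4) (g 9),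
   comm (g 8) (g 5), comm (g 8) (g 6), comm (g 8) (g 7), comm (g 8) (g 9),
   comm (g 7) (g 5), comm (g 7) (g 6), comm (g 7) (g 9),
   braid (g 1) (g 0), braid (g 2) (g 0), braid (g 3) (g 0),
   g 4 * g 5 * ((g 1 * g 2 * g 0) ^ 4)⁻¹,
   g 6 * g 7 * ((g 1 * g 3 * g 0) ^ 4)⁻¹,
   g 8 * g 9 * ((g 2 * g 3 * g 0) ^ 4)⁻¹,
   g 4 * g 8 * g 7 * ((g 1 * g 2 * g 3 * g 0) ^ 3)⁻¹}

/-- The Gervais presentation of the pure mapping class group `PMod(1,3,0)`. -/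
abbrev G130 : Type := PresentedGroup G130rels

/-- The standard basis of the free abelian group `ℤ³` (written multiplicatively). -/
def u (i : Fin 3) : Multiplicative (Fin 3 → ℤ) := Multiplicative.ofAdd (Pi.single i 1)

/-- The fundamental element `Δ = (a1 a2 a3 b)^3` of `A(D₄)`. -/
def Δ : AD4 :=
  (PresentedGroup.of 0 * PresentedGroup.of 1 * PresentedGroup.of 2 * PresentedGroup.of 3) ^ 3

/-- The normal closure of the single element `(Δ⁻¹, u₁ u₂ u₃)` in `A(D₄) × ℤ³`. -/
def N : Subgroup (AD4 × Multiplicative (Fin 3 → ℤ)) :=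
  Subgroup.normalClosure {(Δ⁻¹, u 0 * u 1 * u 2)}

instance : N.Normal := Subgroup.normalClosure_normal

/-! Both groups are universal for the same data: a `D₄`-tuple `a1, a2, a3, b` together with three
commuting elements `c12, c23, c31` that centralize it and satisfy
`c12 c23 c31 = (a1 a2 a3 b)^3`. For the quotient of `A(D₄) × ℤ³` this is clear. In `G130` the other
three generators are forced by the star relations `c_{ij} c_{ji} = (a_i a_j b)^4`, and the
remaining relations on them are then automatic, because `(a_i a_j b)^4` is a full twist and hence
commutes with `a_i, a_j, b`. -/

section FullTwist

-- In the braid group on four strands, with `b` the middle generator, `(a * c * b) ^ 2` is the half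
-- twist: conjugation by it swaps the outer generators `a`, `c` and fixes `b`.

variable {M : Type*} [Monoid M] {a c b : M}

theorem semiconjBy_halfTwist (hac : Commute a c) (hab : a * b * a = b * a * b)
    (hcb : c * b * c = b * c * b) : SemiconjBy ((a * c * b) ^ 2) a c :=
  calc (a * c * b) ^ 2 * a
    _ = c * a * b * c * (a * b * a) := by simp only [pow_two, mul_assoc, hac.eq]
    _ = c * a * (b * c * b) * a * b := by rw [hab]; simp only [mul_assoc]
    _ = c * a * (c * b * c) * a * b := by rw [hcb]
    _ = c * (a * c * b) ^ 2 := by simp only [pow_two, mul_assoc, hac.eq, hac.left_comm]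

theorem halfTwist_eq_rotate (hac : Commute a c) (hab : a * b * a = b * a * b)
    (hcb : c * b * c = b * c * b) : (a * c * b) ^ 2 = (b * (a * c)) ^ 2 :=
  calc (a * c * b) ^ 2
    _ = a * (c * b * c) * a * b := by simp only [pow_two, mul_assoc, hac.eq, hac.left_comm]
    _ = a * b * c * (b * a * b) := by rw [hcb]; simp only [mul_assoc]
    _ = a * b * c * (a * b * a) := by rw [hab]
    _ = (a * b * a) * c * b * a := by simp only [mul_assoc, hac.eq]
    _ = b * a * (b * c * b) * a := by rw [hab]; simp only [mul_assoc]
    _ = b * a * (c * b * c) * a := by rw [hcb]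
    _ = (b * (a * c)) ^ 2 := by simp only [pow_two, mul_assoc, hac.eq, hac.left_comm]

theorem commute_halfTwist (hac : Commute a c) (hab : a * b * a = b * a * b)
    (hcb : c * b * c = b * c * b) : Commute b ((a * c * b) ^ 2) :=
  calc b * (a * c * b) ^ 2
    _ = (b * (a * c)) ^ 2 * b := by simp only [pow_two, mul_assoc]
    _ = (a * c * b) ^ 2 * b := by rw [halfTwist_eq_rotate hac hab hcb]

theorem commute_fullTwist_left (hac : Commute a c) (hab : a * b * a = b * a * b)
    (hcb : c * b * c = b * c * b) : Commute a ((a * c * b) ^ 4) := by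
  have hca : SemiconjBy ((a * c * b) ^ 2) c a := hac.eq ▸ semiconjBy_halfTwist hac.symm hcb hab
  rw [show 4 = 2 + 2 from rfl, pow_add]
  exact (hca.mul_left (semiconjBy_halfTwist hac hab hcb)).symm

theorem commute_fullTwist_right (hac : Commute a c) (hab : a * b * a = b * a * b)
    (hcb : c * b * c = b * c * b) : Commute c ((a * c * b) ^ 4) :=
  hac.eq ▸ commute_fullTwist_left hac.symm hcb hab

theorem commute_fullTwist_middle (hac : Commute a c) (hab : a * b * a = b * a * b)
    (hcb : c * b * c = b * c * b) : Commute b ((a * c * b) ^ 4) := by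
  rw [show 4 = 2 * 2 from rfl, pow_mul]
  exact (commute_halfTwist hac hab hcb).pow_right 2

end FullTwist

section Generation

variable {G K H : Type*} [Group G] [Group K] [Group H]

theorem commute_map_of_closure_eq_top {S : Set G} {T : Set K} (hS : Subgroup.closure S = ⊤)
    (hT : Subgroup.closure T = ⊤) {φ : G →* H} {ψ : K →* H}
    (h : ∀ s ∈ S, ∀ t ∈ T, Commute (φ s) (ψ t)) (x : G) (y : K) : Commute (φ x) (ψ y) := by
  have hφ (s) (hs : s ∈ S) : ⊤ ≤ (Subgroup.centralizer {φ s}).comap ψ := by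
    rw [← hT, Subgroup.closure_le]
    exact fun t ht ↦ Subgroup.mem_centralizer_singleton_iff.2 (h s hs t ht).symm
  have hψ : ⊤ ≤ (Subgroup.centralizer {ψ y}).comap φ := by
    rw [← hS, Subgroup.closure_le]
    exact fun s hs ↦ Subgroup.mem_centralizer_singleton_iff.2
      (Subgroup.mem_centralizer_singleton_iff.1 (hφ s hs (Subgroup.mem_top y))).symm
  exact Subgroup.mem_centralizer_singleton_iff.1 (hψ (Subgroup.mem_top x))

theorem prod_monoidHom_ext {M N P : Type*} [MulOneClass M] [MulOneClass N] [Monoid P]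
    {φ ψ : M × N →* P} (hl : φ.comp (.inl M N) = ψ.comp (.inl M N))
    (hr : φ.comp (.inr M N) = ψ.comp (.inr M N)) : φ = ψ := by
  ext ⟨m, n⟩
  simpa [← map_mul] using congr($hl m * $hr n)

end Generation

section Lattice

variable {ι G : Type*} [Group G]

theorem pairwise_commute_zpowersHom {c : ι → G} (hc : ∀ i j, Commute (c i) (c j)) :
    Pairwise fun i j ↦ ∀ x y, Commute (zpowersHom G (c i) x) (zpowersHom G (c j) y) :=
  fun i j _ _ _ ↦ (hc i j).zpow_zpow _ _

variable [DecidableEq ι]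

theorem closure_range_ofAdd_single [Finite ι] :
    Subgroup.closure (Set.range fun i : ι ↦ Multiplicative.ofAdd (Pi.single i (1 : ℤ))) = ⊤ := by
  have := Fintype.ofFinite ι
  refine eq_top_iff.2 fun n _ ↦ ?_
  have hn : n = ∏ i, Multiplicative.ofAdd (Pi.single i (1 : ℤ)) ^ n.toAdd i := by
    simp only [← ofAdd_zsmul, ← Pi.single_smul', ← ofAdd_sum, smul_eq_mul, mul_one,
      Finset.univ_sum_single, ofAdd_toAdd]
  rw [hn]
  exact prod_mem fun i _ ↦ zpow_mem (Subgroup.subset_closure (Set.mem_range_self i)) _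

variable [Fintype ι]

/-- The homomorphism from the free abelian group `ℤ^ι` to a group sending the standard basis to a
given family `c` of pairwise commuting elements. -/
def latticeLift (c : ι → G) (hc : ∀ i j, Commute (c i) (c j)) :
    Multiplicative (ι → ℤ) →* G :=
  (MonoidHom.noncommPiCoprod (fun i ↦ zpowersHom G (c i)) (pairwise_commute_zpowersHom hc)).comp
    (MulEquiv.funMultiplicative ι ℤ).toMonoidHom

theorem latticeLift_ofAdd_single (c : ι → G) (hc : ∀ i j, Commute (c i) (c j)) (i : ι) :
    latticeLift c hc (Multiplicative.ofAdd (Pi.single i 1)) = c i := by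
  have h : MulEquiv.funMultiplicative ι ℤ (Multiplicative.ofAdd (Pi.single i 1)) =
      Pi.mulSingle i (Multiplicative.ofAdd 1) := by
    ext j : 1
    obtain rfl | hij := eq_or_ne j i <;> simp [*]
  rw [latticeLift, MonoidHom.comp_apply, MulEquiv.coe_toMonoidHom, h,
    MonoidHom.noncommPiCoprod_mulSingle]
  simp

end Lattice

/-- A tuple satisfying the defining relations of the Artin group of type `D₄`, where `b` is the
central node of the diagram. -/
structure IsD4Tuple {M : Type*} [Monoid M] (a : Fin 3 → M) (b : M) : Prop where
  commute_a (i j : Fin 3) : Commute (a i) (a j)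
  braid (i : Fin 3) : a i * b * a i = b * a i * b

/-- A `D₄`-tuple together with commuting elements `c` that centralize it and satisfy the last star
relation. The three boundary twists are indexed cyclically: `c i` stands for `c_{i,i+1}`, that is
`c = (c12, c23, c31)`. -/
structure IsStarTuple {M : Type*} [Monoid M] (a : Fin 3 → M) (b : M) (c : Fin 3 → M) : Prop extends
    IsD4Tuple a b where
  commute_a_c (i j : Fin 3) : Commute (a i) (c j)
  commute_b_c (i : Fin 3) : Commute b (c i)
  commute_c (i j : Fin 3) : Commute (c i) (c j)
  star : c 0 * c 1 * c 2 = (a 0 * a 1 * a 2 * b) ^ 3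

/-- A tuple satisfying all the relations of `G130`, where `d i` stands for `c_{i+1,i}`, that is
`d = (c21, c32, c13)`. -/
structure IsGervaisTuple {M : Type*} [Monoid M] (a : Fin 3 → M) (b : M) (c d : Fin 3 → M) :
    Prop extends IsStarTuple a b c where
  commute_a_d (i : Fin 3) : Commute (a i) (d i)
  commute_a_succ_d (i : Fin 3) : Commute (a (i + 1)) (d i)
  commute_b_d (i : Fin 3) : Commute b (d i)
  commute_c_d (i j : Fin 3) : Commute (c i) (d j)
  star_d (i : Fin 3) : c i * d i = (a i * a (i + 1) * b) ^ 4

theorem IsD4Tuple.map {M M' : Type*} [Monoid M] [Monoid M'] {a : Fin 3 → M} {b : M}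
    (h : IsD4Tuple a b) (φ : M →* M') : IsD4Tuple (φ ∘ a) (φ b) where
  commute_a i j := (h.commute_a i j).map φ
  braid i := by simpa using congr(φ $(h.braid i))

/-- The elements that the star relations force for `c21, c32, c13` in terms of the other
generators. -/
def reverseTwist {H : Type*} [Group H] (a : Fin 3 → H) (b : H) (c : Fin 3 → H) (i : Fin 3) : H :=
  (c i)⁻¹ * (a i * a (i + 1) * b) ^ 4

namespace IsStarTuple

variable {H : Type*} [Group H] {a : Fin 3 → H} {b : H} {c : Fin 3 → H}

theorem isGervaisTuple (h : IsStarTuple a b c) :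
    IsGervaisTuple a b c (reverseTwist a b c) where
  __ := h
  commute_a_d i := (h.commute_a_c i i).inv_right.mul_right
    (commute_fullTwist_left (h.commute_a _ _) (h.braid _) (h.braid _))
  commute_a_succ_d i := (h.commute_a_c (i + 1) i).inv_right.mul_right
    (commute_fullTwist_right (h.commute_a _ _) (h.braid _) (h.braid _))
  commute_b_d i := (h.commute_b_c i).inv_right.mul_right
    (commute_fullTwist_middle (h.commute_a _ _) (h.braid _) (h.braid _))
  commute_c_d i j := (h.commute_c i j).inv_right.mul_right <| Commute.pow_right
    (((h.commute_a_c j i).symm.mul_right (h.commute_a_c (j + 1) i).symm).mul_right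
      (h.commute_b_c i).symm) 4
  star_d _ := mul_inv_cancel_left _ _

end IsStarTuple

theorem forall_AD4rels_lift_eq_one_iff {H : Type*} [Group H] (f : Fin 4 → H) :
    (∀ r ∈ AD4rels, FreeGroup.lift f r = 1) ↔ IsD4Tuple (f ∘ ![0, 1, 2]) (f 3) := by
  simp only [AD4rels, Set.mem_insert_iff, Set.mem_singleton_iff, forall_eq_or_imp, forall_eq,
    map_mul, map_inv, FreeGroup.lift_apply_of, mul_inv_eq_one]
  constructor
  · rintro ⟨h01, h02, h12, hb⟩
    constructor
    · simp [Fin.forall_fin_succ, commute_iff_eq, h01, h02, h12]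
    · simpa [Fin.forall_fin_succ] using hb
  · intro h
    exact ⟨h.commute_a 0 1, h.commute_a 0 2, h.commute_a 1 2, h.braid 0, h.braid 1, h.braid 2⟩

theorem lift_comm_eq_one_iff {H : Type*} [Group H] (f : Fin 10 → H) (i j : Fin 10) :
    FreeGroup.lift f (G130aux.comm (G130aux.g i) (G130aux.g j)) = 1 ↔ Commute (f i) (f j) := by
  simp only [G130aux.comm, G130aux.g, map_mul, map_inv, FreeGroup.lift_apply_of, mul_inv_eq_one,
    commute_iff_eq]

theorem lift_braid_eq_one_iff {H : Type*} [Group H] (f : Fin 10 → H) (i j : Fin 10) :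
    FreeGroup.lift f (G130aux.braid (G130aux.g i) (G130aux.g j)) = 1 ↔
      f i * f j * f i = f j * f i * f j := by
  simp only [G130aux.braid, G130aux.g, map_mul, map_inv, FreeGroup.lift_apply_of, mul_inv_eq_one]

theorem forall_G130rels_lift_eq_one_iff {H : Type*} [Group H] (f : Fin 10 → H) :
    (∀ r ∈ G130rels, FreeGroup.lift f r = 1) ↔
      IsGervaisTuple (f ∘ ![1, 2, 3]) (f 0) (f ∘ ![4, 8, 7]) (f ∘ ![5, 9, 6]) := by
  simp only [G130rels, Set.mem_insert_iff, Set.mem_singleton_iff, forall_eq_or_imp, forall_eq,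
    lift_comm_eq_one_iff, lift_braid_eq_one_iff]
  simp only [G130aux.g, map_mul, map_inv, map_pow, FreeGroup.lift_apply_of, mul_inv_eq_one]
  constructor
  · intro h
    have star_31 : f 7 * f 6 = (f 3 * f 1 * f 0) ^ 4 := by
      have h76 : Commute (f 7) (f 6) := by simp only [h]
      have h13 : Commute (f 1) (f 3) := by simp only [h]
      rw [h76.eq, ← h13.eq]
      simp only [h]
    refine ⟨⟨⟨?_, ?_⟩, ?_, ?_, ?_, ?_⟩, ?_, ?_, ?_, ?_, ?_⟩ <;>
      simp [Fin.forall_fin_succ, h, Commute.symm, star_31]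
  · rintro ⟨⟨⟨haa, hab⟩, hac, hbc, hcc, hstar⟩, had, had', hbd, hcd, hcd'⟩
    have star_13 : f 6 * f 7 = (f 1 * f 3 * f 0) ^ 4 :=
      calc f 6 * f 7
        _ = f 7 * f 6 := (hcd 2 2).symm.eq
        _ = (f 3 * f 1 * f 0) ^ 4 := hcd' 2
        _ = (f 1 * f 3 * f 0) ^ 4 := congr(($(haa 2 0) * f 0) ^ 4)
    exact ⟨haa 0 1, haa 0 2, haa 1 2,
      hac 0 0, had 0, had' 2, hac 0 2, hac 0 1,
      hac 1 0, had' 0, hac 1 2, hac 1 1, had 1,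
      hac 2 0, had 2, hac 2 2, hac 2 1, had' 1,
      hbc 0, hbd 0, hbd 2, hbc 2, hbc 1, hbd 1,
      hcd 0 0, hcd 0 2, hcc 0 2, hcc 0 1, hcd 0 1,
      hcd 1 0, hcd 1 2, hcc 1 2, hcd 1 1,
      hcd 2 0, hcd 2 2, hcd 2 1,
      hab 0, hab 1, hab 2, hcd' 0, star_13, hcd' 1, hstar⟩

theorem freeGroupLift_of_eq_one {α : Type*} {rels : Set (FreeGroup α)} {r : FreeGroup α}
    (hr : r ∈ rels) : FreeGroup.lift (PresentedGroup.of (rels := rels)) r = 1 := by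
  have h : FreeGroup.lift (PresentedGroup.of (rels := rels)) = PresentedGroup.mk rels :=
    FreeGroup.ext_hom _ _ fun _ ↦ FreeGroup.lift_apply_of
  rw [h, PresentedGroup.one_of_mem hr]

namespace AD4

/-- The generators `a1, a2, a3` of the Artin group of type `D₄`. -/
def a : Fin 3 → AD4 := PresentedGroup.of ∘ ![0, 1, 2]

/-- The generator of the Artin group of type `D₄` at the central node of the diagram. -/
def b : AD4 := PresentedGroup.of 3

theorem isD4Tuple : IsD4Tuple a b :=
  (forall_AD4rels_lift_eq_one_iff _).1 fun _ ↦ freeGroupLift_of_eq_one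

theorem range_of_eq : Set.range (PresentedGroup.of : Fin 4 → AD4) = insert b (Set.range a) := by
  refine (Set.range_subset_iff.2 fun i ↦ ?_).antisymm
    (Set.insert_subset ⟨3, rfl⟩ (Set.range_comp_subset_range _ _))
  fin_cases i
  exacts [.inr ⟨0, rfl⟩, .inr ⟨1, rfl⟩, .inr ⟨2, rfl⟩, .inl rfl]

theorem Δ_eq : Δ = (a 0 * a 1 * a 2 * b) ^ 3 := rfl

variable {H : Type*} [Group H] {x : Fin 3 → H} {y : H}

/-- The homomorphism out of the Artin group of type `D₄` determined by a `D₄`-tuple. -/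
def lift (h : IsD4Tuple x y) : AD4 →* H :=
  PresentedGroup.toGroup (f := ![x 0, x 1, x 2, y]) <| (forall_AD4rels_lift_eq_one_iff _).2 <| by
    have hx : ![x 0, x 1, x 2, y] ∘ ![0, 1, 2] = x := by
      funext i
      fin_cases i <;> rfl
    rw [hx]
    exact h

theorem lift_a (h : IsD4Tuple x y) (i : Fin 3) : lift h (a i) = x i := by
  fin_cases i <;> exact PresentedGroup.toGroup.of _

theorem lift_b (h : IsD4Tuple x y) : lift h b = y :=
  PresentedGroup.toGroup.of _

theorem hom_ext {φ ψ : AD4 →* H} (ha : ∀ i, φ (a i) = ψ (a i)) (hb : φ b = ψ b) : φ = ψ := by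
  refine PresentedGroup.ext fun i ↦ ?_
  fin_cases i
  exacts [ha 0, ha 1, ha 2, hb]

end AD4

namespace G130

/-- The generators `a1, a2, a3` of `G130`. -/
def a : Fin 3 → G130 := PresentedGroup.of ∘ ![1, 2, 3]

/-- The generator `b` of `G130`. -/
def b : G130 := PresentedGroup.of 0

/-- The generators `c12, c23, c31` of `G130`. -/
def c : Fin 3 → G130 := PresentedGroup.of ∘ ![4, 8, 7]

/-- The generators `c21, c32, c13` of `G130`. -/
def d : Fin 3 → G130 := PresentedGroup.of ∘ ![5, 9, 6]

theorem isGervaisTuple : IsGervaisTuple a b c d :=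
  (forall_G130rels_lift_eq_one_iff _).1 fun _ ↦ freeGroupLift_of_eq_one

variable {H : Type*} [Group H] {x z : Fin 3 → H} {y : H}

/-- The images of the ten generators of `G130`, in the order of the presentation, under the
homomorphism determined by a star tuple. -/
def generatorImage (x : Fin 3 → H) (y : H) (z : Fin 3 → H) : Fin 10 → H :=
  ![y, x 0, x 1, x 2, z 0, reverseTwist x y z 0, reverseTwist x y z 2, z 2, z 1,
    reverseTwist x y z 1]

/-- The homomorphism out of `G130` determined by a star tuple. -/
def lift (h : IsStarTuple x y z) : G130 →* H :=
  PresentedGroup.toGroup (f := generatorImage x y z) <| (forall_G130rels_lift_eq_one_iff _).2 <| by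
    have hx : generatorImage x y z ∘ ![1, 2, 3] = x := by funext i; fin_cases i <;> rfl
    have hz : generatorImage x y z ∘ ![4, 8, 7] = z := by funext i; fin_cases i <;> rfl
    have hw : generatorImage x y z ∘ ![5, 9, 6] = reverseTwist x y z := by
      funext i
      fin_cases i <;> rfl
    rw [hx, hz, hw]
    exact h.isGervaisTuple

theorem lift_a (h : IsStarTuple x y z) (i : Fin 3) : lift h (a i) = x i := by
  fin_cases i <;> exact PresentedGroup.toGroup.of _

theorem lift_b (h : IsStarTuple x y z) : lift h b = y :=
  PresentedGroup.toGroup.of _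

theorem lift_c (h : IsStarTuple x y z) (i : Fin 3) : lift h (c i) = z i := by
  fin_cases i <;> exact PresentedGroup.toGroup.of _

theorem hom_ext {φ ψ : G130 →* H} (ha : ∀ i, φ (a i) = ψ (a i)) (hb : φ b = ψ b)
    (hc : ∀ i, φ (c i) = ψ (c i)) : φ = ψ := by
  have hd (i : Fin 3) : φ (d i) = ψ (d i) := by
    rw [eq_inv_mul_of_mul_eq (isGervaisTuple.star_d i)]
    simp only [map_mul, map_inv, map_pow, ha, hb, hc]
  refine PresentedGroup.ext fun i ↦ ?_
  fin_cases i
  exacts [hb, ha 0, ha 1, ha 2, hc 0, hd 0, hd 2, hc 2, hc 1, hd 1]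

end G130

/-- The quotient of `A(D₄) × ℤ³` by the star relation `u₁ u₂ u₃ = (a1 a2 a3 b)^3`. -/
abbrev StarQuotient : Type := (AD4 × Multiplicative (Fin 3 → ℤ)) ⧸ N

namespace StarQuotient

/-- The images in the quotient of the generators `a1, a2, a3` of `A(D₄)`. -/
def a (i : Fin 3) : StarQuotient := QuotientGroup.mk' N (AD4.a i, 1)

/-- The image in the quotient of the generator `b` of `A(D₄)`. -/
def b : StarQuotient := QuotientGroup.mk' N (AD4.b, 1)

/-- The images in the quotient of the standard basis of `ℤ³`. -/
def c (i : Fin 3) : StarQuotient := QuotientGroup.mk' N (1, u i)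

theorem star : c 0 * c 1 * c 2 = (a 0 * a 1 * a 2 * b) ^ 3 := by
  have h : (Δ⁻¹, u 0 * u 1 * u 2) ∈ N := Subgroup.subset_normalClosure rfl
  exact ((QuotientGroup.eq (s := N)).2 (by simpa [AD4.Δ_eq] using h)).symm

theorem isStarTuple : IsStarTuple a b c where
  __ := AD4.isD4Tuple.map ((QuotientGroup.mk' N).comp (.inl _ _))
  commute_a_c _ _ := (MonoidHom.commute_inl_inr _ _).map (QuotientGroup.mk' N)
  commute_b_c _ := (MonoidHom.commute_inl_inr _ _).map (QuotientGroup.mk' N)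
  commute_c i j := (Commute.all (u i) (u j)).map ((QuotientGroup.mk' N).comp (.inr _ _))
  star := star

variable {H : Type*} [Group H] {x z : Fin 3 → H} {y : H}

theorem commute_lift_latticeLift (h : IsStarTuple x y z) (g : AD4)
    (n : Multiplicative (Fin 3 → ℤ)) :
    Commute (AD4.lift h.toIsD4Tuple g) (latticeLift z h.commute_c n) := by
  refine commute_map_of_closure_eq_top (PresentedGroup.closure_range_of AD4rels)
    closure_range_ofAdd_single ?_ g n
  simp only [AD4.range_of_eq, Set.forall_mem_insert, Set.forall_mem_range, AD4.lift_a, AD4.lift_b,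
    latticeLift_ofAdd_single]
  exact ⟨h.commute_b_c, h.commute_a_c⟩

/-- The homomorphism out of `A(D₄) × ℤ³` determined by a star tuple. -/
def prodLift (h : IsStarTuple x y z) : AD4 × Multiplicative (Fin 3 → ℤ) →* H :=
  (AD4.lift h.toIsD4Tuple).noncommCoprod (latticeLift z h.commute_c)
    (commute_lift_latticeLift h)

theorem prodLift_a (h : IsStarTuple x y z) (i : Fin 3) : prodLift h (AD4.a i, 1) = x i := by
  rw [prodLift, MonoidHom.noncommCoprod_apply, AD4.lift_a, map_one, mul_one]

theorem prodLift_b (h : IsStarTuple x y z) : prodLift h (AD4.b, 1) = y := by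
  rw [prodLift, MonoidHom.noncommCoprod_apply, AD4.lift_b, map_one, mul_one]

theorem prodLift_u (h : IsStarTuple x y z) (i : Fin 3) : prodLift h (1, u i) = z i := by
  rw [prodLift, MonoidHom.noncommCoprod_apply, map_one, one_mul]
  exact latticeLift_ofAdd_single _ _ i

theorem N_le_ker_prodLift (h : IsStarTuple x y z) : N ≤ (prodLift h).ker := by
  refine Subgroup.normalClosure_le_normal (Set.singleton_subset_iff.2 ?_)
  have hΔ : (Δ⁻¹, u 0 * u 1 * u 2) =
      (((AD4.a 0, 1) * (AD4.a 1, 1) * (AD4.a 2, 1) * (AD4.b, 1)) ^ 3)⁻¹ *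
        ((1, u 0) * (1, u 1) * (1, u 2)) := by
    simp [AD4.Δ_eq]
  rw [SetLike.mem_coe, MonoidHom.mem_ker, hΔ]
  simp only [map_mul, map_inv, map_pow, prodLift_a, prodLift_b, prodLift_u, h.star,
    inv_mul_cancel]

/-- The homomorphism out of the star quotient determined by a star tuple. -/
def lift (h : IsStarTuple x y z) : StarQuotient →* H :=
  QuotientGroup.lift N (prodLift h) (N_le_ker_prodLift h)

theorem lift_a (h : IsStarTuple x y z) (i : Fin 3) : lift h (a i) = x i :=
  prodLift_a h i

theorem lift_b (h : IsStarTuple x y z) : lift h b = y :=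
  prodLift_b h

theorem lift_c (h : IsStarTuple x y z) (i : Fin 3) : lift h (c i) = z i :=
  prodLift_u h i

theorem hom_ext {φ ψ : StarQuotient →* H} (ha : ∀ i, φ (a i) = ψ (a i)) (hb : φ b = ψ b)
    (hc : ∀ i, φ (c i) = ψ (c i)) : φ = ψ :=
  QuotientGroup.monoidHom_ext N <| prod_monoidHom_ext (AD4.hom_ext ha hb) <|
    MonoidHom.eq_of_eqOn_dense closure_range_ofAdd_single <| Set.eqOn_range.2 (funext hc)

end StarQuotient

/-- The isomorphism given by the fact that both groups are universal for star tuples. -/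
def starEquiv : G130 ≃* StarQuotient :=
  MonoidHom.toMulEquiv (G130.lift StarQuotient.isStarTuple)
    (StarQuotient.lift G130.isGervaisTuple.toIsStarTuple)
    (G130.hom_ext (by simp [G130.lift_a, StarQuotient.lift_a])
      (by simp [G130.lift_b, StarQuotient.lift_b]) (by simp [G130.lift_c, StarQuotient.lift_c]))
    (StarQuotient.hom_ext (by simp [G130.lift_a, StarQuotient.lift_a])
      (by simp [G130.lift_b, StarQuotient.lift_b]) (by simp [G130.lift_c, StarQuotient.lift_c]))

theorem starEquiv_a (i : Fin 3) : starEquiv (G130.a i) = QuotientGroup.mk' N (AD4.a i, 1) :=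
  G130.lift_a StarQuotient.isStarTuple i

theorem starEquiv_b : starEquiv G130.b = QuotientGroup.mk' N (AD4.b, 1) :=
  G130.lift_b StarQuotient.isStarTuple

theorem starEquiv_c (i : Fin 3) : starEquiv (G130.c i) = QuotientGroup.mk' N (1, u i) :=
  G130.lift_c StarQuotient.isStarTuple i

/-- Proposition 8: `PMod(1,3,0)` is isomorphic to `(A(D₄) × ℤ³)` modulo the single star
relation `c12 c23 c31 = (a1 a2 a3 b)^3`, with `a1, a2, a3, b` corresponding to the generators
of `A(D₄)` and `c12, c23, c31` to the standard basis `u₁, u₂, u₃` of `ℤ³`. -/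
theorem stmt_6 :
    ∃ e : G130 ≃* (AD4 × Multiplicative (Fin 3 → ℤ)) ⧸ N,
      e (PresentedGroup.of 1) = QuotientGroup.mk' N (PresentedGroup.of 0, 1) ∧
      e (PresentedGroup.of 2) = QuotientGroup.mk' N (PresentedGroup.of 1, 1) ∧
      e (PresentedGroup.of 3) = QuotientGroup.mk' N (PresentedGroup.of 2, 1) ∧
      e (PresentedGroup.of 0) = QuotientGroup.mk' N (PresentedGroup.of 3, 1) ∧
      e (PresentedGroup.of 4) = QuotientGroup.mk' N (1, u 0) ∧
      e (PresentedGroup.of 8) = QuotientGroup.mk' N (1, u 1) ∧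
      e (PresentedGroup.of 7) = QuotientGroup.mk' N (1, u 2) := by
  exact ⟨starEquiv, starEquiv_a 0, starEquiv_a 1, starEquiv_a 2, starEquiv_b, starEquiv_c 0,
    starEquiv_c 1, starEquiv_c 2⟩
end

section
/- In B4, the subgroup generated by the two elements σ1^2*σ3 and σ2 is not isomorphic to the free group of rank 2, i.e., there is no group isomorphism between Subgroup.closure {σ1^2*σ3, σ2} and FreeGroup (Fin 2). -/
/-- Braid relations of the braid group `B₄` on generators `σ1 = of 0`, `σ2 = of 1`,
`σ3 = of 2`. -/
def B4rels : Set (FreeGroup (Fin 3)) :=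
  {FreeGroup.of 0 * FreeGroup.of 1 * FreeGroup.of 0 *
      (FreeGroup.of 1 * FreeGroup.of 0 * FreeGroup.of 1)⁻¹,
   FreeGroup.of 1 * FreeGroup.of 2 * FreeGroup.of 1 *
      (FreeGroup.of 2 * FreeGroup.of 1 * FreeGroup.of 2)⁻¹,
   FreeGroup.of 0 * FreeGroup.of 2 * (FreeGroup.of 2 * FreeGroup.of 0)⁻¹}

/-- The braid group on 4 strands, as a presented group. -/
abbrev B4 : Type := PresentedGroup B4rels

/-!
Put `δ = σ₁σ₂σ₃`. The braid relations say that conjugation by `δ` shifts `σ₁ ↦ σ₂ ↦ σ₃`, so moving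
every `δ` to the right gives `(σ₁δ)³ = σ₁σ₂σ₃δ³ = δ⁴`. Thus `δ⁴` commutes with both `σ₁δ` and `δ`,
hence with `σ₁`, and then with its conjugates `σ₂` and `σ₃`: it is central. Since `σ₁²σ₃σ₂` is
conjugate to `σ₁δ` by `σ₃`, its cube is also `δ⁴`, which is nontrivial because its exponent sum
is `12`. So the subgroup generated by `σ₁²σ₃` and `σ₂` has nontrivial center, whereas a free group
of rank at least two has trivial center.
-/

section FreeGroup

variable {α : Type*}

theorem center_freeGroup_eq_bot [Nontrivial α] : Subgroup.center (FreeGroup α) = ⊥ := by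
  classical
  rw [Subgroup.eq_bot_iff_forall]
  intro w hw
  by_contra hw_ne
  have hnil : w.toWord ≠ [] := mt FreeGroup.toWord_eq_nil_iff.1 hw_ne
  -- `x` cancels neither in front of `w`, by its index, nor behind `w`, by its sign.
  obtain ⟨i, hi⟩ := exists_ne (w.toWord.head hnil).1
  let x : α × Bool := (i, (w.toWord.getLast hnil).2)
  have cons_reduced : FreeGroup.IsReduced (x :: w.toWord) := by
    refine List.isChain_cons.2 ⟨?_, FreeGroup.isReduced_toWord⟩
    simp [List.head?_eq_some_head hnil, x, hi]
  have concat_reduced : FreeGroup.IsReduced (w.toWord ++ [x]) := by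
    refine List.isChain_append.2 ⟨FreeGroup.isReduced_toWord, List.isChain_singleton x, ?_⟩
    simp [List.getLast?_eq_some_getLast hnil, x]
  have mk_eq : FreeGroup.mk (x :: w.toWord) = FreeGroup.mk (w.toWord ++ [x]) := by
    rw [← List.singleton_append, ← FreeGroup.mul_mk, ← FreeGroup.mul_mk, FreeGroup.mk_toWord]
    exact Subgroup.mem_center_iff.1 hw (FreeGroup.mk [x])
  have word_eq : x :: w.toWord = w.toWord ++ [x] := by
    simpa only [cons_reduced.reduce_eq, concat_reduced.reduce_eq] using FreeGroup.reduce.sound mk_eq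
  have head_eq : x = w.toWord.head hnil := by
    simpa [List.head?_eq_some_head hnil] using congrArg List.head? word_eq
  exact hi (congrArg Prod.fst head_eq)

theorem isEmpty_mulEquiv_freeGroup_of_nontrivial_center [Nontrivial α] {G : Type*} [Group G]
    [Nontrivial (Subgroup.center G)] : IsEmpty (G ≃* FreeGroup α) := by
  refine ⟨fun e => ?_⟩
  have := (Subgroup.centerCongr e).symm.toEquiv.nontrivial
  exact (Subgroup.nontrivial_iff_ne_bot _).1 this center_freeGroup_eq_bot

end FreeGroup

section Group

variable {G : Type*} [Group G]

theorem nontrivial_center_of_mem_of_mem_center {H : Subgroup G} {z : G} (hzH : z ∈ H)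
    (hz : z ∈ Subgroup.center G) (hz_ne : z ≠ 1) : Nontrivial (Subgroup.center H) := by
  refine (Subgroup.nontrivial_iff_exists_ne_one _).2 ⟨⟨z, hzH⟩, ?_, ?_⟩
  · exact Subgroup.mem_center_iff.2 fun g => Subtype.ext (Subgroup.mem_center_iff.1 hz g)
  · exact fun h => hz_ne (congrArg Subtype.val h)

variable {a b c d : G}

theorem semiconjBy_mul_mul_left_of_braid (hab : a * b * a = b * a * b) (hac : Commute a c) :
    SemiconjBy (a * b * c) a b :=
  calc
    a * b * c * a = a * b * a * c := by rw [mul_assoc _ c, mul_assoc _ a, hac.eq]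
    _ = b * (a * b * c) := by rw [hab]; group

theorem semiconjBy_mul_mul_right_of_braid (hbc : b * c * b = c * b * c) (hac : Commute a c) :
    SemiconjBy (a * b * c) b c :=
  calc
    a * b * c * b = a * (b * c * b) := by group
    _ = a * c * b * c := by rw [hbc]; group
    _ = c * (a * b * c) := by rw [hac.eq]; group

theorem mul_pow_three_of_semiconjBy (hab : SemiconjBy d a b) (hbc : SemiconjBy d b c) :
    (a * d) ^ 3 = a * b * c * d ^ 3 :=
  calc
    (a * d) ^ 3 = a * (d * a) * (d * a) * d := by simp only [pow_three, mul_assoc]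
    _ = a * b * (d * b) * d ^ 2 := by rw [hab.eq]; simp only [sq, mul_assoc]
    _ = a * b * c * d ^ 3 := by rw [hbc.eq]; simp only [sq, pow_three, mul_assoc]

end Group

namespace B4

/-- The standard generators of `B₄`, indexed from `0`: `σ i` is the paper's `σ_{i+1}`. -/
abbrev σ (i : Fin 3) : B4 := PresentedGroup.of i

theorem braid_σ_zero_σ_one : σ 0 * σ 1 * σ 0 = σ 1 * σ 0 * σ 1 :=
  PresentedGroup.mk_eq_mk_of_mul_inv_mem (Or.inl rfl)

theorem braid_σ_one_σ_two : σ 1 * σ 2 * σ 1 = σ 2 * σ 1 * σ 2 :=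
  PresentedGroup.mk_eq_mk_of_mul_inv_mem (Or.inr (Or.inl rfl))

theorem commute_σ_zero_σ_two : Commute (σ 0) (σ 2) :=
  PresentedGroup.mk_eq_mk_of_mul_inv_mem (Or.inr (Or.inr rfl))

/-- The product `δ = σ₁σ₂σ₃`, whose fourth power is the full twist. -/
def δ : B4 := σ 0 * σ 1 * σ 2

theorem semiconjBy_δ_σ_zero_σ_one : SemiconjBy δ (σ 0) (σ 1) :=
  semiconjBy_mul_mul_left_of_braid braid_σ_zero_σ_one commute_σ_zero_σ_two

theorem semiconjBy_δ_σ_one_σ_two : SemiconjBy δ (σ 1) (σ 2) :=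
  semiconjBy_mul_mul_right_of_braid braid_σ_one_σ_two commute_σ_zero_σ_two

theorem σ_zero_mul_δ_pow_three : (σ 0 * δ) ^ 3 = δ ^ 4 := by
  rw [mul_pow_three_of_semiconjBy semiconjBy_δ_σ_zero_σ_one semiconjBy_δ_σ_one_σ_two, ← δ,
    ← pow_succ']

theorem commute_δ_pow_four_σ (i : Fin 3) : Commute (δ ^ 4) (σ i) := by
  have commute_δ : Commute (δ ^ 4) δ := Commute.pow_self δ 4
  have commute_shift {x y : B4} (hxy : SemiconjBy δ x y) (hx : Commute (δ ^ 4) x) :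
      Commute (δ ^ 4) y := by
    rw [show y = δ * x * δ⁻¹ from eq_mul_inv_of_mul_eq hxy.eq.symm]
    exact (commute_δ.mul_right hx).mul_right commute_δ.inv_right
  have commute_zero : Commute (δ ^ 4) (σ 0) := by
    have commute_mul : Commute (δ ^ 4) (σ 0 * δ) := by
      rw [← σ_zero_mul_δ_pow_three]
      exact Commute.pow_self _ 3
    simpa only [mul_inv_cancel_right] using commute_mul.mul_right commute_δ.inv_right
  have commute_one := commute_shift semiconjBy_δ_σ_zero_σ_one commute_zero
  have commute_two := commute_shift semiconjBy_δ_σ_one_σ_two commute_one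
  fin_cases i
  exacts [commute_zero, commute_one, commute_two]

theorem δ_pow_four_mem_center : δ ^ 4 ∈ Subgroup.center B4 := by
  rw [Subgroup.center_eq_iInf (PresentedGroup.closure_range_of B4rels)]
  simp only [Subgroup.mem_iInf, Subgroup.mem_centralizer_singleton_iff, Set.forall_mem_range]
  exact fun i => (commute_δ_pow_four_σ i).eq

theorem semiconjBy_σ_two_σ_zero_mul_δ : SemiconjBy (σ 2) (σ 0 * δ) (σ 0 ^ 2 * σ 2 * σ 1) :=
  calc
    σ 2 * (σ 0 * δ) = σ 2 * σ 0 ^ 2 * σ 1 * σ 2 := by simp only [δ, sq, mul_assoc]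
    _ = σ 0 ^ 2 * σ 2 * σ 1 * σ 2 := by rw [(commute_σ_zero_σ_two.pow_left 2).eq]

theorem σ_zero_sq_mul_σ_two_mul_σ_one_pow_three : (σ 0 ^ 2 * σ 2 * σ 1) ^ 3 = δ ^ 4 := by
  have conj : SemiconjBy (σ 2) (δ ^ 4) ((σ 0 ^ 2 * σ 2 * σ 1) ^ 3) := by
    simpa only [σ_zero_mul_δ_pow_three] using semiconjBy_σ_two_σ_zero_mul_δ.pow_right 3
  exact mul_right_cancel (conj.eq.symm.trans (commute_δ_pow_four_σ 2).eq.symm)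

/-- The exponent sum of a braid, the homomorphism sending every generator to `1 : ℤ`; the target is
written multiplicatively. -/
def exponentSum : B4 →* Multiplicative ℤ :=
  PresentedGroup.toGroup (f := fun _ => Multiplicative.ofAdd 1) <| by
    rintro r (rfl | rfl | rfl) <;> simp

theorem exponentSum_σ (i : Fin 3) : exponentSum (σ i) = Multiplicative.ofAdd 1 :=
  PresentedGroup.toGroup.of _

theorem exponentSum_δ : exponentSum δ = Multiplicative.ofAdd 3 := by
  simp only [δ, map_mul, exponentSum_σ]
  rfl

theorem δ_pow_four_ne_one : δ ^ 4 ≠ 1 := by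
  intro h
  have := congrArg exponentSum h
  rw [map_pow, exponentSum_δ, map_one] at this
  exact absurd this (by decide)

end B4

theorem stmt_19_general {α : Type*} [Nontrivial α] :
    IsEmpty
      ((Subgroup.closure {(PresentedGroup.of 0 : B4) ^ 2 * PresentedGroup.of 2,
          PresentedGroup.of 1} : Subgroup B4) ≃* FreeGroup α) := by
  set H : Subgroup B4 := Subgroup.closure {B4.σ 0 ^ 2 * B4.σ 2, B4.σ 1}
  have δ_pow_four_mem : B4.δ ^ 4 ∈ H := by
    rw [← B4.σ_zero_sq_mul_σ_two_mul_σ_one_pow_three]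
    exact pow_mem (mul_mem (Subgroup.subset_closure (.inl rfl))
      (Subgroup.subset_closure (.inr rfl))) 3
  have : Nontrivial (Subgroup.center H) :=
    nontrivial_center_of_mem_of_mem_center δ_pow_four_mem B4.δ_pow_four_mem_center
      B4.δ_pow_four_ne_one
  exact isEmpty_mulEquiv_freeGroup_of_nontrivial_center

/-- Answer to Hamidi-Tehrani's question: the subgroup of `B₄` generated by `σ1² σ3` and
`σ2` is not free of rank 2. -/
theorem stmt_19 :
    IsEmpty
      ((Subgroup.closure {(PresentedGroup.of 0 : B4) ^ 2 * PresentedGroup.of 2,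
          PresentedGroup.of 1} : Subgroup B4) ≃* FreeGroup (Fin 2)) :=
  stmt_19_general
end
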